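/- arXiv:1604.00888 — 3 statements merged into one kernel-verified Lean document; each statement's English description precedes it below -/
import Mathlib

section
/- Fix 0 < ε < 1, let p : ℕ → ℝ satisfy 0 ≤ p(n) ≤ 1 − ε for all n, and let r : ℕ → ℕ satisfy r(n) ≥ 1 for all n. Suppose p(n)·√n / (r(n)·log n) → ∞ as n → ∞. Let q(n) denote the Erdős–Rényi probability that a graph drawn from G(n, p(n)) does NOT contain r(n) pairwise edge-disjoint Hamilton cycles. Then log q(n) / (n · log(1 − p(n))) → 1 as n → ∞; that is, the failure probability equals (1 − p(n))^{(1+o(1))n}. -/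
open Classical in
/-- The Erdős–Rényi probability that a graph drawn from `G(n, p)` satisfies property `A`. -/
noncomputable def erProb (n : ℕ) (p : ℝ) (A : SimpleGraph (Fin n) → Prop) : ℝ :=
  ∑ G : SimpleGraph (Fin n),
    if A G then p ^ G.edgeSet.ncard * (1 - p) ^ (n.choose 2 - G.edgeSet.ncard) else 0

/-- `G` contains `r` pairwise edge-disjoint Hamilton cycles. -/
def SimpleGraph.HasEdgeDisjointHamCycles {V : Type*} [DecidableEq V]
    (G : SimpleGraph V) (r : ℕ) : Prop :=
  ∃ c : Fin r → Σ a : V, G.Walk a a,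
    (∀ i, (c i).2.IsHamiltonianCycle) ∧
    ∀ i j, i ≠ j → ∀ e ∈ (c i).2.edges, e ∉ (c j).2.edges

/-- The list `l` is a closed walk of `G`, returning from its last entry to its first. -/
def SimpleGraph.IsClosedChain {V : Type*} (G : SimpleGraph V) (l : List V) : Prop :=
  l.IsChain G.Adj ∧ ∀ x ∈ l.getLast?, ∀ y ∈ l.head?, G.Adj x y

namespace SimpleGraph

variable {V : Type*} {G : SimpleGraph V}

lemma isClosedChain_append_iff {l₁ l₂ : List V} (h₁ : l₁ ≠ []) (h₂ : l₂ ≠ []) :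
    G.IsClosedChain (l₁ ++ l₂) ↔ l₁.IsChain G.Adj ∧ l₂.IsChain G.Adj ∧
      (∀ x ∈ l₁.getLast?, ∀ y ∈ l₂.head?, G.Adj x y) ∧
      (∀ x ∈ l₂.getLast?, ∀ y ∈ l₁.head?, G.Adj x y) := by
  simp only [IsClosedChain, List.isChain_append, List.getLast?_append_of_ne_nil _ h₂,
    List.head?_append_of_ne_nil _ h₁, and_assoc]

lemma IsClosedChain.append_comm {l₁ l₂ : List V} (h : G.IsClosedChain (l₁ ++ l₂)) :
    G.IsClosedChain (l₂ ++ l₁) := by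
  rcases eq_or_ne l₁ [] with rfl | h₁
  · simpa using h
  rcases eq_or_ne l₂ [] with rfl | h₂
  · simpa using h
  rw [isClosedChain_append_iff h₁ h₂] at h
  rw [isClosedChain_append_iff h₂ h₁]
  tauto

lemma Walk.IsPath.mk_notMem_edges {a b : V} {w : G.Walk a b} (hw : w.IsPath)
    (hlen : 2 ≤ w.length) : s(b, a) ∉ w.edges := by
  cases w with
  | nil => simp at hlen
  | @cons _ c _ h q =>
    rw [Walk.cons_isPath_iff] at hw
    rw [Walk.edges_cons, List.mem_cons, not_or]
    refine ⟨fun he => ?_, fun he => hw.2 (q.snd_mem_support_of_mem_edges he)⟩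
    have hbc : b = c := by
      rcases Sym2.eq_iff.1 he with ⟨-, h'⟩ | ⟨h', -⟩
      · exact absurd h' h.ne
      · exact h'
    subst hbc
    have := Walk.length_eq_zero_iff.2 (Walk.isPath_iff_nil.1 hw.1)
    rw [Walk.length_cons] at hlen
    omega

/-- A closed walk without repetition through all of at least three vertices gives a Hamilton
cycle. -/
lemma IsClosedChain.exists_isHamiltonianCycle [Fintype V] [DecidableEq V] {l : List V}
    (h : G.IsClosedChain l) (hl : l.Nodup) (hmem : ∀ v, v ∈ l) (hcard : 3 ≤ Fintype.card V) :
    ∃ a, ∃ w : G.Walk a a, w.IsHamiltonianCycle := by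
  have hlen : l.length = Fintype.card V := by
    rw [← List.toFinset_card_of_nodup hl, ← Finset.card_univ]
    congr 1
    ext v
    simp [hmem]
  obtain _ | ⟨a, _ | ⟨b, l⟩⟩ := l
  · simp at hlen; omega
  · simp at hlen; omega
  have hadj : G.Adj ((a :: b :: l).getLast (by simp)) ((a :: b :: l).head (by simp)) :=
    h.2 _ (by rw [List.getLast?_eq_getLast_of_ne_nil (by simp)]; simp) _ (by simp)
  let w := Walk.ofSupport (a :: b :: l) (by simp) h.1
  have hw : w.support = a :: b :: l := Walk.support_ofSupport _ _
  have hwp : w.IsPath := by rw [Walk.isPath_def, hw]; exact hl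
  refine ⟨_, Walk.cons hadj w, ?_⟩
  rw [Walk.isHamiltonianCycle_iff_isCycle_and_length_eq, Walk.cons_isCycle_iff]
  refine ⟨⟨hwp, ?_⟩, ?_⟩
  · refine hwp.mk_notMem_edges ?_
    have := w.length_support
    rw [hw] at this
    simp only [List.length_cons] at this hlen
    omega
  · rw [Walk.length_cons, ← hlen, ← Walk.length_support, hw]

section Extension

variable [DecidableEq V]

/-- A closed walk can be rotated so that a prescribed entry comes last. -/
lemma IsClosedChain.exists_rotation {l : List V} (h : G.IsClosedChain l) (hl : l.Nodup) {x : V}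
    (hx : x ∈ l) :
    ∃ l', G.IsClosedChain l' ∧ l'.Nodup ∧ l'.Perm l ∧ l'.formPerm = l.formPerm ∧
      x ∈ l'.getLast? ∧ l.formPerm x ∈ l'.head? := by
  obtain ⟨s, t, rfl⟩ := List.append_of_mem hx
  have hst : s ++ x :: t = (s ++ [x]) ++ t := by simp
  have hrot : (s ++ x :: t) ~r (t ++ (s ++ [x])) := hst ▸ List.isRotated_append
  have hform := List.formPerm_eq_of_isRotated hl hrot
  refine ⟨t ++ (s ++ [x]), (hst ▸ h).append_comm, hrot.nodup_iff.1 hl, hrot.perm.symm, hform.symm,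
    by simp, ?_⟩
  rw [hform]
  rw [← List.append_assoc]
  rcases hts : t ++ s with _ | ⟨y, u⟩
  · simp
  · simp [List.formPerm_cons_concat_apply_last y x u]

/-- If two consecutive entries of a closed walk are joined by a path outside it, then there is a
longer closed walk. -/
lemma IsClosedChain.exists_longer_of_consecutive {l p : List V} (h : G.IsClosedChain l)
    (hl : l.Nodup) {x : V} (hx : x ∈ l) (hp : p ≠ []) (hpn : p.Nodup) (hpl : ∀ z ∈ p, z ∉ l)
    (hpc : p.IsChain G.Adj) (hxp : ∀ z ∈ p.head?, G.Adj x z)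
    (hpx : ∀ z ∈ p.getLast?, G.Adj z (l.formPerm x)) :
    ∃ l', G.IsClosedChain l' ∧ l'.Nodup ∧ l.length < l'.length := by
  obtain ⟨l', hc, hn, hperm, -, hlast, hhead⟩ := h.exists_rotation hl hx
  have hl' : l' ≠ [] := by
    rintro rfl
    simp at hlast
  refine ⟨l' ++ p, ?_, ?_, ?_⟩
  · rw [isClosedChain_append_iff hl' hp]
    refine ⟨hc.1, hpc, fun a ha z hz => ?_, fun a ha z hz => ?_⟩
    · rw [Option.mem_unique ha hlast]; exact hxp z hz
    · rw [Option.mem_unique hz hhead]; exact hpx a ha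
  · refine List.Nodup.append hn hpn fun z hz hz' => hpl z hz' (hperm.mem_iff.1 hz)
  · rw [List.length_append, hperm.length_eq]
    have := List.length_pos_iff.2 hp
    omega

/-- If the successors of two entries `x ≠ y` of a closed walk are adjacent and `x`, `y` are joined
by a path outside it, then there is a longer closed walk. -/
lemma IsClosedChain.exists_longer_of_adj {l p : List V} (h : G.IsClosedChain l)
    (hl : l.Nodup) {x y : V} (hx : x ∈ l) (hy : y ∈ l) (hxy : x ≠ y) (hp : p ≠ []) (hpn : p.Nodup)
    (hpl : ∀ z ∈ p, z ∉ l) (hpc : p.IsChain G.Adj) (hxp : ∀ z ∈ p.head?, G.Adj x z)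
    (hpy : ∀ z ∈ p.getLast?, G.Adj z y) (hadj : G.Adj (l.formPerm x) (l.formPerm y)) :
    ∃ l', G.IsClosedChain l' ∧ l'.Nodup ∧ l.length < l'.length := by
  obtain ⟨l', hc, hn, hperm, hform, hlast, hhead⟩ := h.exists_rotation hl hx
  obtain ⟨s, t, rfl⟩ := List.append_of_mem (hperm.mem_iff.2 hy)
  have ht : t ≠ [] := by
    rintro rfl
    simp only [List.getLast?_append, List.getLast?_singleton, Option.mem_def] at hlast
    simp at hlast
    exact hxy hlast.symm
  have hst : s ++ y :: t = (s ++ [y]) ++ t := by simp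
  have htlast : x ∈ t.getLast? := by
    rwa [hst, List.getLast?_append_of_ne_nil _ ht] at hlast
  have hthead : l.formPerm y ∈ t.head? := by
    rw [← hform]
    have hlt : s.length + 1 < (s ++ y :: t).length := by
      have := List.length_pos_iff.2 ht
      simp; omega
    have := List.formPerm_apply_lt_getElem _ hn s.length hlt
    simp only [List.getElem_append_right le_rfl, Nat.sub_self, List.getElem_cons_zero] at this
    rw [this]
    rw [List.getElem_append_right (by omega)]
    obtain _ | ⟨b, t⟩ := t
    · exact absurd rfl ht
    · simp
  have hshead : l.formPerm x ∈ (s ++ [y]).head? := by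
    rwa [hst, List.head?_append_of_ne_nil _ (by simp)] at hhead
  have hslast : y ∈ (s ++ [y]).getLast? := by simp
  have hs : s ++ [y] ≠ [] := by simp
  rw [hst] at hc hn hperm
  generalize s ++ [y] = s at *
  have hcs := (isClosedChain_append_iff hs ht).1 hc
  refine ⟨s.reverse ++ (t ++ p), ?_, ?_, ?_⟩
  · rw [isClosedChain_append_iff (by simpa) (by simp [hp])]
    refine ⟨?_, ?_, fun a ha z hz => ?_, fun a ha z hz => ?_⟩
    · rw [List.isChain_reverse]
      exact hcs.1.imp fun a b hab => hab.symm
    · rw [List.isChain_append]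
      refine ⟨hcs.2.1, hpc, fun a ha z hz => ?_⟩
      rw [Option.mem_unique ha htlast]; exact hxp z hz
    · rw [List.getLast?_reverse] at ha
      rw [List.head?_append_of_ne_nil _ ht] at hz
      rw [Option.mem_unique ha hshead, Option.mem_unique hz hthead]
      exact hadj
    · rw [List.head?_reverse] at hz
      rw [List.getLast?_append_of_ne_nil _ hp] at ha
      rw [Option.mem_unique hz hslast]
      exact hpy a ha
  · have h1 : (s ++ t ++ p).Nodup :=
      List.Nodup.append hn hpn fun z hz hz' => hpl z hz' (hperm.mem_iff.1 hz)
    refine (List.Perm.nodup_iff ?_).1 h1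
    rw [List.append_assoc]
    exact List.Perm.append_right _ (List.reverse_perm s).symm
  · have := List.length_pos_iff.2 hp
    have := hperm.length_eq
    simp at this ⊢
    omega

end Extension

/-- **Chvátal–Erdős**: if no `k` vertices are independent and no fewer than `k` vertices
separate two nonempty sets, then there is a Hamilton cycle. -/
theorem exists_isHamiltonianCycle_of_no_indep_of_no_separator [Fintype V] [DecidableEq V] {k : ℕ}
    (hcard : 3 ≤ Fintype.card V) (hk : k ≤ Fintype.card V)
    (hindep : ∀ K : Finset V, K.card = k → ∃ x ∈ K, ∃ y ∈ K, G.Adj x y)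
    (hconn : ∀ A B : Finset V, A.Nonempty → B.Nonempty → Disjoint A B →
      Fintype.card V < A.card + B.card + k → ∃ a ∈ A, ∃ b ∈ B, G.Adj a b) :
    ∃ a, ∃ w : G.Walk a a, w.IsHamiltonianCycle := by
  classical
  obtain ⟨K, -, hK⟩ := Finset.exists_subset_card_eq (s := (Finset.univ : Finset V)) (n := k)
    (by simpa using hk)
  obtain ⟨x₀, -, y₀, -, hxy₀⟩ := hindep K hK
  have hex : ∃ m, ∃ l : List V, G.IsClosedChain l ∧ l.Nodup ∧ l.length = m ∧ l ≠ [] :=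
    ⟨2, [x₀, y₀], ⟨by simpa using hxy₀, by simpa using hxy₀.symm⟩, by simpa using hxy₀.ne, rfl,
      by simp⟩
  have hbdd : ∀ m, (∃ l : List V, G.IsClosedChain l ∧ l.Nodup ∧ l.length = m ∧ l ≠ []) →
      m ≤ Fintype.card V := by
    rintro m ⟨l, -, hl, rfl, -⟩
    exact hl.length_le_card
  obtain ⟨l, hc, hn, hlen, hne⟩ := Nat.findGreatest_spec
    (P := fun m => ∃ l : List V, G.IsClosedChain l ∧ l.Nodup ∧ l.length = m ∧ l ≠ [])
    (hbdd _ hex.choose_spec) hex.choose_spec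
  have hmax : ¬ ∃ l', G.IsClosedChain l' ∧ l'.Nodup ∧ l.length < l'.length := by
    rintro ⟨l', hc', hn', hlt⟩
    have hP : ∃ l : List V, G.IsClosedChain l ∧ l.Nodup ∧ l.length = l'.length ∧ l ≠ [] :=
      ⟨l', hc', hn', rfl, by rintro rfl; simp at hlt⟩
    have := Nat.le_findGreatest
      (P := fun m => ∃ l : List V, G.IsClosedChain l ∧ l.Nodup ∧ l.length = m ∧ l ≠ [])
      (hbdd _ hP) hP
    omega
  by_cases hall : ∀ v, v ∈ l
  · exact hc.exists_isHamiltonianCycle hn hall hcard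
  exfalso
  push Not at hall
  obtain ⟨v, hv⟩ := hall
  let O : SimpleGraph {x // x ∉ l} := G.comap Subtype.val
  let H : Finset V := {x | ∃ hx : x ∉ l, O.Reachable ⟨v, hv⟩ ⟨x, hx⟩}
  have hHl : ∀ x ∈ H, x ∉ l := fun x hx => by
    obtain ⟨h, -⟩ := (Finset.mem_filter.1 hx).2
    exact h
  have hvH : v ∈ H := by simp [H, hv]
  have hHadj : ∀ x ∈ H, ∀ y, y ∉ l → G.Adj x y → y ∈ H := by
    intro x hx y hy hxy
    obtain ⟨h, hr⟩ := (Finset.mem_filter.1 hx).2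
    refine Finset.mem_filter.2 ⟨Finset.mem_univ _, hy, hr.trans ?_⟩
    exact Adj.reachable (show O.Adj ⟨x, h⟩ ⟨y, hy⟩ from hxy)
  let T : Finset V := {x | x ∈ l ∧ ∃ h ∈ H, G.Adj x h}
  have hTmem : ∀ x, x ∈ T ↔ x ∈ l ∧ ∃ h ∈ H, G.Adj x h := fun x => by simp [T]
  have hpath : ∀ x ∈ T, ∀ y ∈ T, ∃ p : List V, p ≠ [] ∧ p.Nodup ∧ (∀ z ∈ p, z ∉ l) ∧
      p.IsChain G.Adj ∧ (∀ z ∈ p.head?, G.Adj x z) ∧ ∀ z ∈ p.getLast?, G.Adj z y := by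
    intro x hx y hy
    obtain ⟨-, a, ha, hxa⟩ := (hTmem x).1 hx
    obtain ⟨-, b, hb, hyb⟩ := (hTmem y).1 hy
    obtain ⟨ha', hra⟩ := (Finset.mem_filter.1 ha).2
    obtain ⟨hb', hrb⟩ := (Finset.mem_filter.1 hb).2
    obtain ⟨w, hw⟩ := (hra.symm.trans hrb).exists_isPath
    refine ⟨w.support.map Subtype.val, mt List.map_eq_nil_iff.1 w.support_ne_nil, ?_, ?_, ?_, ?_,
      ?_⟩
    · exact (List.nodup_map_iff Subtype.val_injective).2 hw.support_nodup
    · intro z hz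
      obtain ⟨u, -, rfl⟩ := List.mem_map.1 hz
      exact u.2
    · rw [List.isChain_map]
      exact w.isChain_adj_support
    · intro z hz
      rw [List.head?_map, List.head?_eq_some_head w.support_ne_nil, Walk.head_support] at hz
      simp at hz
      exact hz ▸ hxa
    · intro z hz
      rw [List.getLast?_map, List.getLast?_eq_some_getLast w.support_ne_nil,
        Walk.getLast_support] at hz
      simp at hz
      exact hz ▸ hyb.symm
  have hsucc : ∀ x ∈ T, l.formPerm x ∉ T := by
    intro x hx hx'
    obtain ⟨p, hp, hpn, hpl, hpc, hxp, hpx⟩ := hpath x hx _ hx'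
    exact hmax (hc.exists_longer_of_consecutive hn ((hTmem x).1 hx).1 hp hpn hpl hpc hxp hpx)
  have hsuccadj : ∀ x ∈ T, ∀ y ∈ T, ¬ G.Adj (l.formPerm x) (l.formPerm y) := by
    intro x hx y hy hadj
    have hxy : x ≠ y := by
      rintro rfl
      exact hadj.ne rfl
    obtain ⟨p, hp, hpn, hpl, hpc, hxp, hpy⟩ := hpath x hx y hy
    exact hmax (hc.exists_longer_of_adj hn ((hTmem x).1 hx).1 ((hTmem y).1 hy).1 hxy hp hpn hpl hpc
      hxp hpy hadj)
  have hsuccl : ∀ x ∈ T, l.formPerm x ∈ l := fun x hx =>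
    List.formPerm_apply_mem_of_mem ((hTmem x).1 hx).1
  have hHT : Disjoint H T := Finset.disjoint_left.2 fun x hx hx' => hHl x hx ((hTmem x).1 hx').1
  have hTcard : k ≤ T.card := by
    by_contra! hlt
    have hB : ((H ∪ T)ᶜ).Nonempty := by
      rcases T.eq_empty_or_nonempty with hT | ⟨x, hx⟩
      · obtain ⟨z, hz⟩ := List.exists_mem_of_ne_nil l hne
        refine ⟨z, ?_⟩
        simp only [hT, Finset.union_empty, Finset.mem_compl]
        exact fun h => hHl z h hz
      · refine ⟨l.formPerm x, ?_⟩
        simp only [Finset.mem_compl, Finset.mem_union, not_or]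
        exact ⟨fun h => hHl _ h (hsuccl x hx), hsucc x hx⟩
    obtain ⟨a, ha, b, hb, hab⟩ := hconn H (H ∪ T)ᶜ ⟨v, hvH⟩ hB
      (Finset.disjoint_left.2 fun x hx hx' => by simp [hx] at hx') (by
        have h1 := Finset.card_add_card_compl (H ∪ T)
        rw [Finset.card_union_of_disjoint hHT] at h1
        omega)
    simp only [Finset.mem_compl, Finset.mem_union, not_or] at hb
    by_cases hbl : b ∈ l
    · exact hb.2 ((hTmem b).2 ⟨hbl, a, ha, hab.symm⟩)
    · exact hb.1 (hHadj a ha b hbl hab)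
  obtain ⟨K, hKs, hK⟩ := Finset.exists_subset_card_eq (s := T.image l.formPerm) (n := k)
    (by rwa [Finset.card_image_of_injective _ (Equiv.injective _)])
  obtain ⟨x, hx, y, hy, hxy⟩ := hindep K hK
  obtain ⟨x', hx', rfl⟩ := Finset.mem_image.1 (hKs hx)
  obtain ⟨y', hy', rfl⟩ := Finset.mem_image.1 (hKs hy)
  exact hsuccadj x' hx' y' hy' hxy

end SimpleGraph

namespace SimpleGraph

section Packing

variable {V : Type*} {G : SimpleGraph V}

/-- If `G` stays Hamiltonian after deleting any graph of maximum degree at most `2 * r`, then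
Hamilton cycles can be removed greedily `r` times. -/
lemma hasEdgeDisjointHamCycles_of_robust [Finite V] [DecidableEq V] {r : ℕ}
    (h : ∀ D : SimpleGraph V, (∀ v, (D.neighborSet v).ncard ≤ 2 * r) →
      ∃ a, ∃ w : (G \ D).Walk a a, w.IsHamiltonianCycle) :
    G.HasEdgeDisjointHamCycles r := by
  suffices ∀ j ≤ r, G.HasEdgeDisjointHamCycles j from this r le_rfl
  intro j
  induction j with
  | zero => exact fun _ => ⟨Fin.elim0, fun i => i.elim0, fun i => i.elim0⟩
  | succ j ih =>
    intro hj
    obtain ⟨c, hham, hdisj⟩ := ih (by omega)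
    let D : SimpleGraph V := ⨆ i, (c i).2.toSubgraph.spanningCoe
    obtain ⟨a, w, hw⟩ := h D fun v => by
      have hD : D.neighborSet v = ⋃ i, (c i).2.toSubgraph.neighborSet v := by
        ext u
        simp [D]
      rw [hD]
      refine (Set.ncard_iUnion_le_of_fintype _).trans ?_
      refine (Finset.sum_le_card_nsmul _ _ 2 fun i _ => ?_).trans ?_
      · exact ((hham i).isCycle.ncard_neighborSet_toSubgraph_eq_two ((hham i).mem_support v)).le
      · simp; omega
    have hwD : ∀ i, ∀ e ∈ w.edges, e ∉ (c i).2.edges := by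
      intro i e he hei
      have h1 := w.edges_subset_edgeSet he
      rw [edgeSet_sdiff] at h1
      refine h1.2 ?_
      rw [← Walk.mem_edges_toSubgraph] at hei
      have : (c i).2.toSubgraph.spanningCoe ≤ D := le_iSup (fun i =>
        (c i).2.toSubgraph.spanningCoe) i
      exact edgeSet_mono this (by simpa using hei)
    refine ⟨Fin.cons ⟨a, w.mapLe sdiff_le⟩ c, fun i => ?_, fun i i' hii => ?_⟩
    · refine Fin.cases ?_ (fun i => ?_) i
      · exact Walk.IsHamiltonianCycle.map Function.bijective_id hw
      · exact hham i
    · revert hii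
      refine Fin.cases ?_ (fun i => ?_) i <;> refine Fin.cases ?_ (fun i' => ?_) i'
      · simp
      · intro _ e he
        change e ∈ (w.mapLe _).edges at he
        rw [Walk.edges_mapLe_eq_edges] at he
        exact hwD i' e he
      · intro _ e he he'
        change e ∈ (w.mapLe _).edges at he'
        rw [Walk.edges_mapLe_eq_edges] at he'
        exact hwD i e he' he
      · intro hii
        exact hdisj i i' (by simpa using hii)

/-- A graph with an isolated vertex has no Hamilton cycle. -/
lemma not_hasEdgeDisjointHamCycles_of_isolated [DecidableEq V] {r : ℕ} (hr : 1 ≤ r)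
    {v : V} (hv : ∀ u, ¬ G.Adj v u) : ¬ G.HasEdgeDisjointHamCycles r := by
  rintro ⟨c, hham, -⟩
  have h := (hham ⟨0, hr⟩).isCycle.ncard_neighborSet_toSubgraph_eq_two
    ((hham ⟨0, hr⟩).mem_support v)
  obtain ⟨u, hu⟩ : ((c ⟨0, hr⟩).2.toSubgraph.neighborSet v).Nonempty :=
    Set.nonempty_of_ncard_ne_zero (by omega)
  exact hv u hu.adj_sub

end Packing

section Counting

variable {V : Type*} [Fintype V] [DecidableEq V] {G D : SimpleGraph V}

/-- The pairs with one entry in `A` and another in `B`. -/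
def pairsBetween (A B : Finset V) : Finset (Sym2 V) := (A ×ˢ B).image Sym2.mk.uncurry

/-- The pairs of distinct entries of `K`. -/
def pairsWithin (K : Finset V) : Finset (Sym2 V) := K.offDiag.image Sym2.mk.uncurry

open Classical in
/-- A set `F` of pairs touching `A` contains few edges of `G` if all of them belong to a graph `D`
of bounded degree. -/
lemma card_filter_mem_edgeSet_le {F : Finset (Sym2 V)} {A : Finset V} {d : ℕ}
    (hD : ∀ v, (D.neighborSet v).ncard ≤ d) (hF : ∀ e ∈ F, ∃ a ∈ A, a ∈ e)
    (hFD : ∀ e ∈ F, e ∉ (G \ D).edgeSet) : (F.filter (· ∈ G.edgeSet)).card ≤ d * A.card := by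
  have hsub : F.filter (· ∈ G.edgeSet) ⊆
      A.biUnion fun v => (D.neighborFinset v).image fun u => s(v, u) := by
    intro e he
    rw [Finset.mem_filter] at he
    obtain ⟨a, ha, hae⟩ := hF e he.1
    obtain ⟨b, rfl⟩ := Sym2.mem_iff_exists.1 hae
    have h1 := hFD _ he.1
    have h2 := he.2
    simp only [mem_edgeSet, sdiff_adj, not_and, not_not] at h1 h2
    simp only [Finset.mem_biUnion, Finset.mem_image, mem_neighborFinset]
    exact ⟨a, ha, b, h1 h2, rfl⟩
  refine (Finset.card_le_card hsub).trans ?_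
  rw [mul_comm]
  refine Finset.card_biUnion_le_card_mul _ _ _ fun v _ => Finset.card_image_le.trans ?_
  rw [← Set.ncard_coe_finset, coe_neighborFinset]
  exact hD v

open Classical in
/-- If every `k` vertices span many edges and every pair of large disjoint sets has many edges in
between, then `G` has `r` edge-disjoint Hamilton cycles. -/
theorem hasEdgeDisjointHamCycles_of_many_edges {r k : ℕ} (hcard : 3 ≤ Fintype.card V)
    (hk : k ≤ Fintype.card V)
    (hwithin : ∀ K : Finset V, K.card = k →
      2 * r * k < ((pairsWithin K).filter (· ∈ G.edgeSet)).card)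
    (hbetween : ∀ A C : Finset V, A.Nonempty → C.card < k → A.card ≤ ((A ∪ C)ᶜ).card →
      2 * r * A.card < ((pairsBetween A (A ∪ C)ᶜ).filter (· ∈ G.edgeSet)).card) :
    G.HasEdgeDisjointHamCycles r := by
  refine hasEdgeDisjointHamCycles_of_robust fun D hD => ?_
  refine exists_isHamiltonianCycle_of_no_indep_of_no_separator hcard hk ?_ ?_
  · intro K hK
    by_contra! hno
    refine (hwithin K hK).not_ge (hK ▸ card_filter_mem_edgeSet_le hD ?_ ?_)
    · intro e he
      obtain ⟨⟨a, b⟩, hab, rfl⟩ := Finset.mem_image.1 he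
      exact ⟨a, (Finset.mem_offDiag.1 hab).1, by simp⟩
    · intro e he
      obtain ⟨⟨a, b⟩, hab, rfl⟩ := Finset.mem_image.1 he
      exact hno a (Finset.mem_offDiag.1 hab).1 b (Finset.mem_offDiag.1 hab).2.1
  · have key : ∀ A B : Finset V, A.Nonempty → A.card ≤ B.card → Disjoint A B →
        Fintype.card V < A.card + B.card + k → ∃ a ∈ A, ∃ b ∈ B, (G \ D).Adj a b := by
      intro A B hA hAB hdisj hlt
      by_contra! hno
      have hB : (A ∪ (A ∪ B)ᶜ)ᶜ = B := by
        ext x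
        have : x ∈ A → x ∉ B := fun h => Finset.disjoint_left.1 hdisj h
        simp only [Finset.mem_compl, Finset.mem_union]
        tauto
      have h1 := Finset.card_add_card_compl (A ∪ B)
      rw [Finset.card_union_of_disjoint hdisj] at h1
      have h2 := hbetween A (A ∪ B)ᶜ hA (by omega) (by rwa [hB])
      rw [hB] at h2
      refine h2.not_ge (card_filter_mem_edgeSet_le hD ?_ ?_)
      · intro e he
        obtain ⟨⟨a, b⟩, hab, rfl⟩ := Finset.mem_image.1 he
        exact ⟨a, (Finset.mem_product.1 hab).1, by simp⟩
      · intro e he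
        obtain ⟨⟨a, b⟩, hab, rfl⟩ := Finset.mem_image.1 he
        exact hno a (Finset.mem_product.1 hab).1 b (Finset.mem_product.1 hab).2
    intro A B hA hB hdisj hlt
    rcases le_total A.card B.card with h | h
    · exact key A B hA h hdisj hlt
    · obtain ⟨b, hb, a, ha, hab⟩ := key B A hB h hdisj.symm (by omega)
      exact ⟨a, ha, b, hb, hab.symm⟩

end Counting

end SimpleGraph

section Probability

variable {n : ℕ} {p : ℝ}

lemma erProb_mono (hp0 : 0 ≤ p) (hp1 : p ≤ 1) {A B : SimpleGraph (Fin n) → Prop}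
    (h : ∀ G, A G → B G) : erProb n p A ≤ erProb n p B := by
  classical
  refine Finset.sum_le_sum fun G _ => ?_
  have hw : 0 ≤ p ^ G.edgeSet.ncard * (1 - p) ^ (n.choose 2 - G.edgeSet.ncard) :=
    mul_nonneg (pow_nonneg hp0 _) (pow_nonneg (by linarith) _)
  split_ifs with h1 h2 h2
  · rfl
  · exact absurd (h G h1) h2
  · exact hw
  · rfl

lemma erProb_or_le (hp0 : 0 ≤ p) (hp1 : p ≤ 1) (A B : SimpleGraph (Fin n) → Prop) :
    erProb n p (fun G => A G ∨ B G) ≤ erProb n p A + erProb n p B := by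
  classical
  simp only [erProb, ← Finset.sum_add_distrib]
  refine Finset.sum_le_sum fun G _ => ?_
  have hw : 0 ≤ p ^ G.edgeSet.ncard * (1 - p) ^ (n.choose 2 - G.edgeSet.ncard) :=
    mul_nonneg (pow_nonneg hp0 _) (pow_nonneg (by linarith) _)
  by_cases h1 : A G <;> by_cases h2 : B G <;> simp [h1, h2, hw]

lemma erProb_exists_le {ι : Type*} (hp0 : 0 ≤ p) (hp1 : p ≤ 1) (s : Finset ι)
    (A : ι → SimpleGraph (Fin n) → Prop) :
    erProb n p (fun G => ∃ i ∈ s, A i G) ≤ ∑ i ∈ s, erProb n p (A i) := by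
  classical
  induction s using Finset.induction_on with
  | empty => simp [erProb]
  | insert i s hi ih =>
    rw [Finset.sum_insert hi]
    refine le_trans ?_ ((erProb_or_le hp0 hp1 _ _).trans (add_le_add_right ih _))
    exact erProb_mono hp0 hp1 fun G hG => by simpa using hG

/-- The probability that none of a given set of pairs is an edge. -/
lemma erProb_forall_notMem_edgeSet (E : Finset (Sym2 (Fin n))) (hE : ∀ e ∈ E, ¬ e.IsDiag) :
    erProb n p (fun G => ∀ e ∈ E, e ∉ G.edgeSet) = (1 - p) ^ E.card := by
  classical
  let U : Finset (Sym2 (Fin n)) := (⊤ : SimpleGraph (Fin n)).edgeFinset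
  have hU : ∀ e, e ∈ U ↔ ¬ e.IsDiag := fun e => by simp [U]
  have hUcard : U.card = n.choose 2 := by
    have h := SimpleGraph.card_edgeFinset_top_eq_card_choose_two (V := Fin n)
    rw [Fintype.card_fin] at h
    convert h
  have hEU : E ⊆ U := fun e he => (hU e).2 (hE e he)
  have hcard : (U \ E).card = n.choose 2 - E.card := by
    rw [Finset.card_sdiff_of_subset hEU, hUcard]
  have hEle : E.card ≤ n.choose 2 := hUcard ▸ Finset.card_le_card hEU
  have hsum := Finset.sum_pow_mul_eq_add_pow p (1 - p) (U \ E)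
  rw [add_sub_cancel, one_pow] at hsum
  have hsplit : erProb n p (fun G => ∀ e ∈ E, e ∉ G.edgeSet) =
      ∑ G ∈ Finset.univ.filter (fun G : SimpleGraph (Fin n) => ∀ e ∈ E, e ∉ G.edgeSet),
        p ^ G.edgeSet.ncard * (1 - p) ^ (n.choose 2 - G.edgeSet.ncard) := by
    rw [Finset.sum_filter]
    exact Finset.sum_congr rfl fun G _ => by congr
  rw [hsplit, ← mul_one (_ ^ E.card), ← congrArg ((1 - p) ^ E.card * ·) hsum, Finset.mul_sum]
  have hsub : ∀ G : SimpleGraph (Fin n), (∀ e ∈ E, e ∉ G.edgeSet) →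
      Finset.univ.filter (· ∈ G.edgeSet) ⊆ U \ E := by
    intro G hG e he
    have he' := (Finset.mem_filter.1 he).2
    exact Finset.mem_sdiff.2 ⟨(hU e).2 (G.not_isDiag_of_mem_edgeSet he'), fun h => hG e h he'⟩
  refine Finset.sum_bij' (fun G _ => Finset.univ.filter (· ∈ G.edgeSet))
    (fun S _ => SimpleGraph.fromEdgeSet (S : Set _)) ?_ ?_ ?_ ?_ ?_
  · exact fun G hG => Finset.mem_powerset.2 (hsub G (Finset.mem_filter.1 hG).2)
  · intro S hS
    rw [Finset.mem_powerset] at hS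
    refine Finset.mem_filter.2 ⟨Finset.mem_univ _, fun e he h => ?_⟩
    rw [SimpleGraph.edgeSet_fromEdgeSet] at h
    exact (Finset.mem_sdiff.1 (hS h.1)).2 he
  · intro G _
    simp
  · intro S hS
    rw [Finset.mem_powerset] at hS
    ext e
    simp only [Finset.mem_filter, SimpleGraph.edgeSet_fromEdgeSet]
    refine ⟨fun h => h.2.1, fun h => ⟨Finset.mem_univ _, h, ?_⟩⟩
    exact (hU e).1 (Finset.mem_sdiff.1 (hS h)).1
  · intro G hG
    have hle := Finset.card_le_card (hsub G (Finset.mem_filter.1 hG).2)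
    have hG' : G.edgeSet.ncard = (Finset.univ.filter (· ∈ G.edgeSet)).card := by
      rw [← Set.ncard_coe_finset, Finset.coe_filter]
      simp
    rw [hcard] at hle
    rw [hG', hcard, mul_left_comm, ← pow_add]
    congr 2
    omega

/-- There are at most `(N + 1) ^ t` sets of size at most `t` in a set of size `N`. -/
lemma Finset.card_filter_powerset_card_le {α : Type*} (U : Finset α) (t : ℕ) :
    (U.powerset.filter fun X => X.card ≤ t).card ≤ (U.card + 1) ^ t := by
  classical
  have hsub : (U.powerset.filter fun X => X.card ≤ t) ⊆
      (Finset.range (t + 1)).biUnion fun i => U.powersetCard i := by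
    intro X hX
    rw [Finset.mem_filter, Finset.mem_powerset] at hX
    rw [Finset.mem_biUnion]
    exact ⟨X.card, Finset.mem_range.2 (by omega), Finset.mem_powersetCard.2 ⟨hX.1, rfl⟩⟩
  refine (Finset.card_le_card hsub).trans (Finset.card_biUnion_le.trans ?_)
  rw [add_pow]
  refine Finset.sum_le_sum fun i hi => ?_
  rw [Finset.card_powersetCard, one_pow, mul_one]
  refine (Nat.choose_le_pow _ _).trans (Nat.le_mul_of_pos_right _ ?_)
  exact Nat.choose_pos (by simpa [Nat.lt_succ_iff] using hi)

open Classical in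
/-- The probability that some set of pairs in a family carries at most `t` edges. -/
lemma erProb_exists_card_filter_le {ι : Type*} (hp0 : 0 ≤ p) (hp1 : p ≤ 1)
    (I : Finset ι) (F : ι → Finset (Sym2 (Fin n))) (t m : ℕ)
    (hF : ∀ i ∈ I, ∀ e ∈ F i, ¬ e.IsDiag) (hm : ∀ i ∈ I, m ≤ (F i).card) :
    erProb n p (fun G => ∃ i ∈ I, ((F i).filter (· ∈ G.edgeSet)).card ≤ t) ≤
      I.card * ((n : ℝ) + 1) ^ (2 * t) * (1 - p) ^ (m - t) := by
  let 𝒳 : Finset (Finset (Sym2 (Fin n))) :=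
    (⊤ : SimpleGraph (Fin n)).edgeFinset.powerset.filter fun X => X.card ≤ t
  have h𝒳 : (𝒳.card : ℝ) ≤ ((n : ℝ) + 1) ^ (2 * t) := by
    have h1 : 𝒳.card ≤ (n.choose 2 + 1) ^ t := by
      have h2 := Finset.card_filter_powerset_card_le (⊤ : SimpleGraph (Fin n)).edgeFinset t
      have h3 := SimpleGraph.card_edgeFinset_top_eq_card_choose_two (V := Fin n)
      rw [Fintype.card_fin] at h3
      rw [← h3]
      convert h2
    have h4 : n.choose 2 + 1 ≤ (n + 1) ^ 2 := by
      have := Nat.choose_le_pow n 2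
      have : (n + 1) ^ 2 = n ^ 2 + 2 * n + 1 := by ring
      omega
    rw [pow_mul]
    exact_mod_cast h1.trans (Nat.pow_le_pow_left h4 t)
  have hsub : ∀ G : SimpleGraph (Fin n), (∃ i ∈ I, ((F i).filter (· ∈ G.edgeSet)).card ≤ t) →
      ∃ x ∈ I ×ˢ 𝒳, ∀ e ∈ F x.1 \ x.2, e ∉ G.edgeSet := by
    rintro G ⟨i, hi, hcard⟩
    refine ⟨(i, (F i).filter (· ∈ G.edgeSet)), Finset.mem_product.2 ⟨hi, ?_⟩, ?_⟩
    · refine Finset.mem_filter.2 ⟨Finset.mem_powerset.2 fun e he => ?_, hcard⟩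
      simpa using hF i hi e (Finset.mem_filter.1 he).1
    · intro e he heG
      rw [Finset.mem_sdiff] at he
      exact he.2 (Finset.mem_filter.2 ⟨he.1, heG⟩)
  refine (erProb_mono hp0 hp1 hsub).trans ((erProb_exists_le hp0 hp1 _ _).trans ?_)
  have hq : 0 ≤ 1 - p := by linarith
  refine (Finset.sum_le_card_nsmul _ _ ((1 - p) ^ (m - t)) fun x hx => ?_).trans ?_
  · rw [Finset.mem_product] at hx
    rw [erProb_forall_notMem_edgeSet _ fun e he => hF _ hx.1 e (Finset.mem_sdiff.1 he).1]
    refine pow_le_pow_of_le_one hq (by linarith) ?_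
    have h1 := hm _ hx.1
    have h2 := (Finset.mem_filter.1 hx.2).2
    have h3 := Finset.le_card_sdiff x.2 (F x.1)
    omega
  · rw [nsmul_eq_mul, Finset.card_product]
    push_cast
    gcongr

end Probability

section FailureProbability

open SimpleGraph

variable {n : ℕ} {p : ℝ}

/-- Isolating one vertex prevents any Hamilton cycle. -/
lemma pow_le_erProb_not_hasEdgeDisjointHamCycles (hp0 : 0 ≤ p) (hp1 : p ≤ 1) (hn : 0 < n) {r : ℕ}
    (hr : 1 ≤ r) :
    (1 - p) ^ n ≤ erProb n p (fun G => ¬ G.HasEdgeDisjointHamCycles r) := by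
  classical
  let v : Fin n := ⟨0, hn⟩
  let E : Finset (Sym2 (Fin n)) := (Finset.univ.erase v).image fun u => s(v, u)
  have hE : ∀ e ∈ E, ¬ e.IsDiag := by
    intro e he
    obtain ⟨u, hu, rfl⟩ := Finset.mem_image.1 he
    simpa using (Finset.ne_of_mem_erase hu).symm
  have hcard : E.card ≤ n :=
    Finset.card_image_le.trans ((Finset.card_le_univ _).trans (by simp))
  calc (1 - p) ^ n ≤ (1 - p) ^ E.card :=
        pow_le_pow_of_le_one (by linarith) (by linarith) hcard
    _ = erProb n p (fun G => ∀ e ∈ E, e ∉ G.edgeSet) := (erProb_forall_notMem_edgeSet E hE).symm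
    _ ≤ _ := by
        refine erProb_mono hp0 hp1 fun G hG => ?_
        refine not_hasEdgeDisjointHamCycles_of_isolated hr (v := v) fun u hu => ?_
        exact hG s(v, u) (Finset.mem_image.2 ⟨u, by simpa using hu.ne', rfl⟩) hu

lemma card_pairsBetween_compl (A C : Finset (Fin n)) :
    (pairsBetween A (A ∪ C)ᶜ).card = A.card * ((A ∪ C)ᶜ).card := by
  rw [pairsBetween, Finset.card_image_of_injOn, Finset.card_product]
  rintro ⟨a, b⟩ hab ⟨c, d⟩ hcd h
  simp only [Finset.coe_product, Set.mem_prod, Finset.mem_coe, Finset.mem_compl, Finset.mem_union,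
    not_or] at hab hcd
  rcases Sym2.eq_iff.1 h with ⟨rfl, rfl⟩ | ⟨rfl, rfl⟩
  · rfl
  · exact absurd hab.1 hcd.2.1

/-- Union bound for the failure probability, over sets spanning few edges and sparse separations. -/
lemma erProb_not_hasEdgeDisjointHamCycles_le (hp0 : 0 ≤ p) (hp1 : p ≤ 1) (hn : 3 ≤ n) (r : ℕ)
    {k : ℕ} (hk : k ≤ n) :
    erProb n p (fun G => ¬ G.HasEdgeDisjointHamCycles r) ≤
      ((n : ℝ) + 1) ^ (k + 4 * r * k) * (1 - p) ^ (k.choose 2 - 2 * r * k) +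
      ∑ a ∈ Finset.Icc 1 n, ((n : ℝ) + 1) ^ (a + k + 4 * r * a) *
        (1 - p) ^ (a * max a (n - k - a) - 2 * r * a) := by
  classical
  have hq : 0 ≤ 1 - p := by linarith
  let S : ℕ → Finset (Finset (Fin n)) := fun a => Finset.univ.powersetCard a
  have hS : ∀ a, ((S a).card : ℝ) ≤ ((n : ℝ) + 1) ^ a := by
    intro a
    have h1 : (S a).card ≤ n ^ a := by
      simpa [S] using Nat.choose_le_pow n a
    exact_mod_cast h1.trans (Nat.pow_le_pow_left (Nat.le_succ n) a)
  let T : Finset (Finset (Fin n)) := Finset.univ.powerset.filter fun X => X.card ≤ k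
  have hT : (T.card : ℝ) ≤ ((n : ℝ) + 1) ^ k := by
    have h1 := Finset.card_filter_powerset_card_le (Finset.univ : Finset (Fin n)) k
    rw [Finset.card_univ, Fintype.card_fin] at h1
    exact_mod_cast h1
  let I : ℕ → Finset (Finset (Fin n) × Finset (Fin n)) := fun a =>
    (S a ×ˢ T).filter fun x => a ≤ ((x.1 ∪ x.2)ᶜ).card
  have hI : ∀ a, ((I a).card : ℝ) ≤ ((n : ℝ) + 1) ^ (a + k) := by
    intro a
    have h1 : (I a).card ≤ (S a).card * T.card :=
      (Finset.card_filter_le _ _).trans (Finset.card_product _ _).le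
    calc ((I a).card : ℝ) ≤ (S a).card * T.card := by exact_mod_cast h1
      _ ≤ ((n : ℝ) + 1) ^ a * ((n : ℝ) + 1) ^ k := by gcongr; exact hS a
      _ = _ := (pow_add _ _ _).symm
  have hcover : ∀ G : SimpleGraph (Fin n), ¬ G.HasEdgeDisjointHamCycles r →
      (∃ K ∈ S k, ((pairsWithin K).filter (· ∈ G.edgeSet)).card ≤ 2 * r * k) ∨
      ∃ a ∈ Finset.Icc 1 n, ∃ x ∈ I a,
        ((pairsBetween x.1 (x.1 ∪ x.2)ᶜ).filter (· ∈ G.edgeSet)).card ≤ 2 * r * a := by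
    intro G hG
    contrapose! hG
    refine hasEdgeDisjointHamCycles_of_many_edges (k := k) (by simpa using hn) (by simpa using hk)
      ?_ ?_
    · intro K hK
      convert hG.1 K (by simpa [S] using hK)
    · intro A C hA hC hAC
      have hAn : A.card ≤ n := by simpa using Finset.card_le_univ A
      convert hG.2 A.card (Finset.mem_Icc.2 ⟨hA.card_pos, hAn⟩) (A, C) ?_
      refine Finset.mem_filter.2 ⟨Finset.mem_product.2 ⟨?_, ?_⟩, hAC⟩
      · simp [S]
      · simpa [T] using hC.le
  refine (erProb_mono hp0 hp1 hcover).trans ((erProb_or_le hp0 hp1 _ _).trans (add_le_add ?_ ?_))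
  · refine (erProb_exists_card_filter_le hp0 hp1 (S k) pairsWithin (2 * r * k) (k.choose 2)
      ?_ ?_).trans ?_
    · intro K _ e he
      obtain ⟨⟨a, b⟩, hab, rfl⟩ := Finset.mem_image.1 he
      simpa using (Finset.mem_offDiag.1 hab).2.2
    · intro K hK
      rw [pairsWithin, Sym2.card_image_offDiag, (Finset.mem_powersetCard.1 hK).2]
    · rw [pow_add, show 2 * (2 * r * k) = 4 * r * k by ring]
      gcongr
      exact hS k
  · refine (erProb_exists_le hp0 hp1 _ _).trans (Finset.sum_le_sum fun a _ => ?_)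
    refine (erProb_exists_card_filter_le hp0 hp1 (I a)
      (fun x => pairsBetween x.1 (x.1 ∪ x.2)ᶜ) (2 * r * a) (a * max a (n - k - a)) ?_ ?_).trans ?_
    · intro x _ e he
      obtain ⟨⟨u, v⟩, huv, rfl⟩ := Finset.mem_image.1 he
      rw [Finset.mem_product] at huv
      have : v ∉ x.1 := fun h => Finset.mem_compl.1 huv.2 (Finset.mem_union_left _ h)
      simp only [Function.uncurry_apply_pair, Sym2.mk_isDiag_iff]
      rintro rfl
      exact this huv.1
    · intro x hx
      rw [Finset.mem_filter, Finset.mem_product, Finset.mem_powersetCard, Finset.mem_filter] at hx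
      obtain ⟨⟨⟨-, hA⟩, -, hC⟩, hle⟩ := hx
      rw [card_pairsBetween_compl, hA]
      have h1 := Finset.card_add_card_compl (x.1 ∪ x.2)
      have h2 := Finset.card_union_le x.1 x.2
      rw [Fintype.card_fin] at h1
      refine Nat.mul_le_mul_left _ (max_le hle ?_)
      omega
    · rw [pow_add _ (a + k), show 2 * (2 * r * a) = 4 * r * a by ring]
      gcongr
      exact hI a

/-- The real-exponent form of a term of the union bound. -/
lemma pow_mul_pow_le_exp (hp0 : 0 ≤ p) (hp1 : p < 1) (i m t : ℕ) {x y lam : ℝ}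
    (hlam : Real.log ((n : ℝ) + 1) ≤ lam) (hx : i * lam ≤ x) (hy : y ≤ (m : ℝ) - t) :
    ((n : ℝ) + 1) ^ i * (1 - p) ^ (m - t) ≤ Real.exp (x - y * (-Real.log (1 - p))) := by
  have h : Real.log (1 - p) ≤ 0 := Real.log_nonpos (by linarith) (by linarith)
  have hn : (0 : ℝ) < (n : ℝ) + 1 := by positivity
  have h1 : ((n : ℝ) + 1) ^ i = Real.exp (i * Real.log ((n : ℝ) + 1)) := by
    rw [Real.exp_nat_mul, Real.exp_log hn]
  have h2 : (1 - p) ^ (m - t) = Real.exp ((m - t : ℕ) * Real.log (1 - p)) := by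
    rw [Real.exp_nat_mul, Real.exp_log (by linarith)]
  rw [h1, h2, ← Real.exp_add, Real.exp_le_exp]
  have h3 : (m : ℝ) - t ≤ ((m - t : ℕ) : ℝ) := by
    have : m ≤ (m - t) + t := by omega
    have : (m : ℝ) ≤ ((m - t : ℕ) : ℝ) + t := by exact_mod_cast this
    linarith
  have h4 : (i : ℝ) * Real.log ((n : ℝ) + 1) ≤ i * lam := by gcongr
  nlinarith

/-- The two sides of a separation by few vertices have product essentially at least `x`, even
after a small loss. -/
lemma le_mul_sub_of_separation {a : ℕ} {b k x η : ℝ} (hη0 : 0 < η) (hη : η ≤ 1 / 200)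
    (hx : 0 ≤ x) (ha : 1 ≤ a) (hab : (a : ℝ) ≤ b) (hb : x - k - a ≤ b) (hk : k ≤ 2 * (η * x))
    (hηx : 1 ≤ η * x) : (1 - 20 * η) * x ≤ a * (b - 16 * η * x) := by
  have hηx' : η * x ≤ 1 / 200 * x := by gcongr
  rcases le_or_gt a 2 with h | h
  · have h1 : (1 : ℝ) ≤ a := by exact_mod_cast ha
    have h2 : (a : ℝ) ≤ 2 := by exact_mod_cast h
    have h3 : (1 - 20 * η) * x ≤ b - 16 * η * x := by linarith
    have h4 : 0 ≤ (1 - 20 * η) * x := by linarith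
    exact h3.trans (le_mul_of_one_le_left (h4.trans h3) h1)
  · have h2 : (3 : ℝ) ≤ a := by exact_mod_cast h
    have h3 : x / 3 ≤ b - 16 * η * x := by linarith
    calc (1 - 20 * η) * x ≤ 3 * (x / 3) := by linarith
      _ ≤ a * (b - 16 * η * x) := by gcongr

/-- Quantitative upper bound for the failure probability. -/
lemma erProb_not_hasEdgeDisjointHamCycles_le_exp {r : ℕ} {η : ℝ} (hp0 : 0 ≤ p) (hp1 : p < 1)
    (hr : 1 ≤ r) (hη0 : 0 < η) (hη : η ≤ 1 / 200) (hlog : 1 ≤ Real.log n)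
    (hM : r * Real.log n ≤ η * (p * √n)) :
    erProb n p (fun G => ¬ G.HasEdgeDisjointHamCycles r) ≤
      Real.exp (-((1 - 27 * η) * (n * -Real.log (1 - p)))) := by
  set s : ℝ := √n with hs
  set L : ℝ := -Real.log (1 - p) with hL
  set l : ℝ := Real.log n with hl
  have hs0 : 0 ≤ s := Real.sqrt_nonneg _
  have hss : s * s = n := Real.mul_self_sqrt (Nat.cast_nonneg n)
  have hR : (1 : ℝ) ≤ r := by exact_mod_cast hr
  have hpL : p ≤ L := by
    have := Real.log_le_sub_one_of_pos (show 0 < 1 - p by linarith)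
    linarith
  have hL0 : 0 ≤ L := hp0.trans hpL
  have hRl : (r : ℝ) ≤ r * l := le_mul_of_one_le_right (by linarith) hlog
  have hML : r * l ≤ η * L * s := by
    have : p * s ≤ L * s := by gcongr
    nlinarith
  have hMs : r * l ≤ η * s := by
    have : p * s ≤ 1 * s := by gcongr
    nlinarith
  have hrs : (r : ℝ) ≤ η * s := hRl.trans hMs
  have hs200 : 200 ≤ s := by nlinarith
  have hsn : s ≤ η * n := by
    rw [← hss]
    nlinarith
  have hn3 : 3 ≤ n := by
    have : (3 : ℝ) ≤ n := by rw [← hss]; nlinarith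
    exact_mod_cast this
  have hnpos : (0 : ℝ) < n := by rw [← hss]; nlinarith
  have hlam : Real.log ((n : ℝ) + 1) ≤ 2 * l := by
    rw [hl, two_mul, ← Real.log_mul hnpos.ne' hnpos.ne']
    refine Real.log_le_log (by linarith) ?_
    have : (3 : ℝ) ≤ n := by exact_mod_cast hn3
    nlinarith
  obtain ⟨k, hk2, hks⟩ : ∃ k : ℕ, 2 * (n : ℝ) ≤ k * k ∧ (k : ℝ) ≤ 2 * s := by
    refine ⟨⌈√(2 * n)⌉₊, ?_, ?_⟩
    · have h1 := Nat.le_ceil (√(2 * (n : ℝ)))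
      have h2 := Real.mul_self_sqrt (show 0 ≤ 2 * (n : ℝ) by positivity)
      have h3 := Real.sqrt_nonneg (2 * (n : ℝ))
      nlinarith
    · have h1 := Nat.ceil_lt_add_one (Real.sqrt_nonneg (2 * (n : ℝ)))
      have h2 : √(2 * (n : ℝ)) ≤ 3 / 2 * s := by
        rw [Real.sqrt_le_left (by positivity), ← hss]
        nlinarith
      linarith
  have hkn : k ≤ n := by
    have : (k : ℝ) ≤ n := by rw [← hss]; nlinarith
    exact_mod_cast this
  have hLn0 : 0 ≤ L * n := by positivity
  have hMn : r * l * s ≤ η * (L * n) := by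
    have : r * l * s ≤ η * L * s * s := by gcongr
    rw [← hss]; linarith
  have hrn : (r : ℝ) * s ≤ η * n := by
    have : (r : ℝ) * s ≤ η * s * s := by gcongr
    rw [← hss]; linarith
  have hwithin : ((n : ℝ) + 1) ^ (k + 4 * r * k) * (1 - p) ^ (k.choose 2 - 2 * r * k) ≤
      Real.exp (-((1 - 25 * η) * (n * L))) := by
    refine (pow_mul_pow_le_exp hp0 hp1 (k + 4 * r * k) (k.choose 2) (2 * r * k)
      (x := 20 * (η * (L * n))) (y := (1 - 5 * η) * n) hlam ?_ ?_).trans ?_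
    · push_cast
      have h1 : ((k : ℝ) + 4 * r * k) ≤ 10 * (r * s) := by
        have h3 : (k : ℝ) ≤ r * k := le_mul_of_one_le_left (Nat.cast_nonneg k) hR
        have h4 : (r : ℝ) * k ≤ r * (2 * s) := by gcongr
        linarith
      have h2 : ((k : ℝ) + 4 * r * k) * (2 * l) ≤ 10 * (r * s) * (2 * l) := by gcongr
      linarith
    · rw [Nat.cast_choose_two]
      push_cast
      have h1 : (r : ℝ) * k ≤ r * (2 * s) := by gcongr
      linarith
    · rw [Real.exp_le_exp]
      linarith
  have hbetween : ∀ a ∈ Finset.Icc 1 n, ((n : ℝ) + 1) ^ (a + k + 4 * r * a) *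
      (1 - p) ^ (a * max a (n - k - a) - 2 * r * a) ≤ Real.exp (-((1 - 25 * η) * (n * L))) := by
    intro a ha
    have ha1 : (1 : ℝ) ≤ a := by exact_mod_cast (Finset.mem_Icc.1 ha).1
    have hb1 : (a : ℝ) ≤ (max a (n - k - a) : ℕ) := by exact_mod_cast le_max_left _ _
    have hb2 : (n : ℝ) - k - a ≤ (max a (n - k - a) : ℕ) := by
      have : n ≤ max a (n - k - a) + k + a := by omega
      have : (n : ℝ) ≤ (max a (n - k - a) : ℕ) + k + a := by exact_mod_cast this
      linarith
    generalize max a (n - k - a) = b at *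
    have hmain := le_mul_sub_of_separation hη0 hη hnpos.le (Finset.mem_Icc.1 ha).1 hb1 hb2
      (show (k : ℝ) ≤ 2 * (η * n) by linarith) (show 1 ≤ η * (n : ℝ) by linarith)
    refine (pow_mul_pow_le_exp hp0 hp1 (a + k + 4 * r * a) (a * b) (2 * r * a)
      (x := 14 * a * (η * (L * n))) (y := a * (b - 2 * η * n)) hlam ?_ ?_).trans ?_
    · push_cast
      have h1 : ((a : ℝ) + k + 4 * r * a) ≤ 7 * a * (r * s) := by
        have h2 : (a : ℝ) ≤ a * (r * s) := le_mul_of_one_le_right (by linarith)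
          (one_le_mul_of_one_le_of_one_le hR (by linarith))
        have h3 : (k : ℝ) ≤ 2 * (a * (r * s)) := by
          have : s ≤ a * r * s := le_mul_of_one_le_left hs0 (one_le_mul_of_one_le_of_one_le ha1 hR)
          linarith
        have h4 : (r : ℝ) * a ≤ r * a * s := le_mul_of_one_le_right (by positivity) (by linarith)
        linarith
      have h2 : ((a : ℝ) + k + 4 * r * a) * (2 * l) ≤ 7 * a * (r * s) * (2 * l) := by gcongr
      have h3 : (a : ℝ) * (r * l * s) ≤ a * (η * (L * n)) := by gcongr
      linarith
    · push_cast
      have h1 : (r : ℝ) ≤ η * n :=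
        (le_mul_of_one_le_right (by linarith) (by linarith)).trans hrn
      have h2 : (a : ℝ) * r ≤ a * (η * n) := by gcongr
      linarith
    · rw [Real.exp_le_exp]
      have h1 := mul_le_mul_of_nonneg_right hmain hL0
      have h2 : 0 ≤ η * (L * n) := by positivity
      linarith
  refine (erProb_not_hasEdgeDisjointHamCycles_le hp0 hp1.le hn3 r hkn).trans ?_
  have hsum := Finset.sum_le_card_nsmul _ _ _ hbetween
  rw [nsmul_eq_mul, Nat.card_Icc, Nat.add_sub_cancel] at hsum
  have hl2 : 2 * l ≤ 2 * η * (L * n) := by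
    have : l ≤ r * l * s := by
      have : 1 * l * 1 ≤ r * l * s := by gcongr; linarith
      linarith
    linarith
  calc _ ≤ ((n : ℝ) + 1) * Real.exp (-((1 - 25 * η) * (n * L))) := by linarith
    _ ≤ Real.exp (2 * l) * Real.exp (-((1 - 25 * η) * (n * L))) := by
        gcongr
        rwa [← Real.log_le_iff_le_exp (by linarith)]
    _ ≤ _ := by
        rw [← Real.exp_add, Real.exp_le_exp]
        linarith

end FailureProbability

theorem random_edge_disjoint_ham_cycles_failure_probability_asymptotics
    (ε : ℝ) (hε0 : 0 < ε) (hε1 : ε < 1)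
    (p : ℕ → ℝ) (hp0 : ∀ n, 0 ≤ p n) (hp1 : ∀ n, p n ≤ 1 - ε)
    (r : ℕ → ℕ) (hr : ∀ n, 1 ≤ r n)
    (hlim : Filter.Tendsto (fun n : ℕ => p n * Real.sqrt n / (r n * Real.log n))
      Filter.atTop Filter.atTop) :
    Filter.Tendsto
      (fun n : ℕ =>
        Real.log (erProb n (p n) (fun G => ¬ G.HasEdgeDisjointHamCycles (r n))) /
          (n * Real.log (1 - p n)))
      Filter.atTop (nhds 1) := by
  have hsmall : ∀ η : ℝ, 0 < η → ∀ᶠ n : ℕ in Filter.atTop,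
      0 < p n ∧ 1 ≤ Real.log n ∧ r n * Real.log n ≤ η * (p n * √n) := by
    intro η hη
    have hlog : ∀ᶠ n : ℕ in Filter.atTop, 1 ≤ Real.log n :=
      (Real.tendsto_log_atTop.comp tendsto_natCast_atTop_atTop).eventually_ge_atTop 1
    filter_upwards [hlim.eventually_ge_atTop η⁻¹, hlog] with n h1 h2
    have hR : (1 : ℝ) ≤ r n := by exact_mod_cast hr n
    have hpos : 0 < r n * Real.log n := by positivity
    rw [le_div_iff₀ hpos, inv_mul_le_iff₀ hη] at h1
    refine ⟨(hp0 n).lt_of_ne ?_, h2, h1⟩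
    intro h
    rw [← h] at h1
    linarith
  have hratio : ∀ n, 0 < p n → 1 ≤ Real.log n →
      0 < (n : ℝ) * -Real.log (1 - p n) ∧
      0 < erProb n (p n) (fun G => ¬ G.HasEdgeDisjointHamCycles (r n)) ∧
      n * Real.log (1 - p n) ≤
        Real.log (erProb n (p n) (fun G => ¬ G.HasEdgeDisjointHamCycles (r n))) := by
    intro n hp hlog
    have hn : 0 < n := by
      rcases n.eq_zero_or_pos with rfl | h
      · norm_num at hlog
      · exact h
    have hq : 0 < 1 - p n := by linarith [hp1 n]
    have hle := pow_le_erProb_not_hasEdgeDisjointHamCycles (hp0 n) (by linarith) hn (hr n)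
    have hpow : 0 < (1 - p n) ^ n := pow_pos hq n
    refine ⟨mul_pos (by exact_mod_cast hn) ?_, hpow.trans_le hle, ?_⟩
    · linarith [Real.log_neg hq (by linarith)]
    · rw [← Real.log_pow]
      exact Real.log_le_log hpow hle
  refine tendsto_order.2 ⟨fun c hc => ?_, fun c hc => ?_⟩
  · obtain ⟨η, hη0, hη, hcη⟩ : ∃ η : ℝ, 0 < η ∧ η ≤ 1 / 200 ∧ c < 1 - 27 * η := by
      refine ⟨min (1 / 200) ((1 - c) / 28), lt_min (by norm_num) (by linarith), min_le_left _ _, ?_⟩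
      have := min_le_right (1 / 200 : ℝ) ((1 - c) / 28)
      linarith
    filter_upwards [hsmall η hη0] with n ⟨hp, hlog, hM⟩
    obtain ⟨hden, hq, -⟩ := hratio n hp hlog
    have hle := erProb_not_hasEdgeDisjointHamCycles_le_exp (hp0 n) (by linarith [hp1 n]) (hr n)
      hη0 hη hlog hM
    rw [← Real.log_le_iff_le_exp hq] at hle
    refine hcη.trans_le ?_
    rw [← neg_div_neg_eq, ← mul_neg, le_div_iff₀ hden]
    linarith
  · filter_upwards [hsmall 1 one_pos] with n ⟨hp, hlog, _⟩
    obtain ⟨hden, -, hle⟩ := hratio n hp hlog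
    refine lt_of_le_of_lt ?_ hc
    rw [← neg_div_neg_eq, ← mul_neg, div_le_one hden]
    linarith
end

section
/- Let n and d be integers with 1 ≤ d ≤ n, and let p ∈ [0,1]. Then the Erdős–Rényi probability that a graph drawn from G(n,p) has minimum degree less than d is at most n · C(n−1, d−1) · (1−p)^{n−d}, where C(m,k) denotes a binomial coefficient. -/
/-- The minimum degree of a graph on `Fin n`. -/
noncomputable def minDeg {n : ℕ} (G : SimpleGraph (Fin n)) : ℕ :=
  ⨅ v : Fin n, (G.neighborSet v).ncard

/-- Union bound for `G(n, p)`. -/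
lemma erProb_le_sum {ι : Type*} (n : ℕ) {p : ℝ} (hp0 : 0 ≤ p) (hp1 : p ≤ 1)
    (s : Finset ι) (A : SimpleGraph (Fin n) → Prop) (B : ι → SimpleGraph (Fin n) → Prop)
    (h : ∀ G, A G → ∃ i ∈ s, B i G) :
    erProb n p A ≤ ∑ i ∈ s, erProb n p (B i) := by
  classical
  unfold erProb
  rw [Finset.sum_comm]
  refine Finset.sum_le_sum fun G _ => ?_
  have hq : 0 ≤ 1 - p := by linarith
  have hw : 0 ≤ p ^ G.edgeSet.ncard * (1 - p) ^ (n.choose 2 - G.edgeSet.ncard) := by positivity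
  have hterm : ∀ i ∈ s, 0 ≤ if B i G then
      p ^ G.edgeSet.ncard * (1 - p) ^ (n.choose 2 - G.edgeSet.ncard) else 0 := by
    intro i _
    split_ifs
    exacts [hw, le_rfl]
  by_cases hA : A G
  · obtain ⟨i, hi, hB⟩ := h G hA
    have := Finset.single_le_sum hterm hi
    rw [if_pos hB] at this
    rwa [if_pos hA]
  · rw [if_neg hA]
    exact Finset.sum_nonneg hterm

open Classical Finset in
/-- The probability that `G(n, p)` contains none of a given set `F` of potential edges. -/
lemma erProb_disjoint_edgeSet (n : ℕ) (p : ℝ) (F : Finset (Sym2 (Fin n)))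
    (hF : F ⊆ (⊤ : SimpleGraph (Fin n)).edgeFinset) :
    erProb n p (fun G => Disjoint G.edgeSet (F : Set (Sym2 (Fin n)))) = (1 - p) ^ #F := by
  set T := (⊤ : SimpleGraph (Fin n)).edgeFinset with hT
  have hTcard : #T = n.choose 2 := by
    have h := SimpleGraph.card_edgeFinset_top_eq_card_choose_two (V := Fin n)
    rw [Fintype.card_fin] at h
    rw [← h, hT]
  have hcard : #(T \ F) + #F = n.choose 2 := by
    rw [← hTcard, card_sdiff_add_card_eq_card hF]
  calc erProb n p (fun G => Disjoint G.edgeSet (F : Set (Sym2 (Fin n))))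
      = ∑ E ∈ (T \ F).powerset, p ^ #E * (1 - p) ^ (n.choose 2 - #E) := by
        rw [erProb, ← sum_filter]
        refine sum_nbij (fun G => G.edgeFinset) ?_ ?_ ?_ ?_
        · intro G hG
          rw [mem_filter, ← SimpleGraph.coe_edgeFinset, disjoint_coe] at hG
          rw [mem_powerset, subset_sdiff]
          exact ⟨SimpleGraph.edgeFinset_mono le_top, hG.2⟩
        · intro G _ H _ h
          exact SimpleGraph.edgeFinset_inj.1 h
        · intro E hE
          rw [mem_coe, mem_powerset, subset_sdiff] at hE
          have hE' : (SimpleGraph.fromEdgeSet (E : Set (Sym2 (Fin n)))).edgeSet = E := by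
            rw [SimpleGraph.edgeSet_fromEdgeSet, sdiff_eq_left, Set.disjoint_left]
            intro e he hd
            have := hE.1 he
            rw [hT, SimpleGraph.mem_edgeFinset] at this
            exact SimpleGraph.not_isDiag_of_mem_edgeSet _ this hd
          refine ⟨SimpleGraph.fromEdgeSet (E : Set (Sym2 (Fin n))), ?_, ?_⟩
          · simp only [coe_filter, mem_univ, true_and, Set.mem_ofPred_eq]
            rw [hE', disjoint_coe]
            exact hE.2
          · apply coe_injective
            rw [SimpleGraph.coe_edgeFinset, hE']
        · intro G _
          rw [← SimpleGraph.coe_edgeFinset, Set.ncard_coe_finset]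
    _ = (1 - p) ^ #F * ∑ E ∈ (T \ F).powerset, p ^ #E * (1 - p) ^ (#(T \ F) - #E) := by
        rw [mul_sum]
        refine sum_congr rfl fun E hE => ?_
        have hle := card_le_card (mem_powerset.1 hE)
        rw [show n.choose 2 - #E = #F + (#(T \ F) - #E) by lia, pow_add]
        ring
    _ = (1 - p) ^ #F := by
        rw [sum_pow_mul_eq_add_pow]
        simp

open Finset in
/-- The probability that `G(n, p)` has no edge between `v` and a set `S` not containing `v`. -/
lemma erProb_disjoint_neighborSet (n : ℕ) (p : ℝ) (v : Fin n) (S : Finset (Fin n)) (hv : v ∉ S) :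
    erProb n p (fun G => Disjoint (G.neighborSet v) S) = (1 - p) ^ #S := by
  classical
  have hF : S.image (fun w => s(v, w)) ⊆ (⊤ : SimpleGraph (Fin n)).edgeFinset := by
    intro e he
    obtain ⟨w, hw, rfl⟩ := mem_image.1 he
    rw [SimpleGraph.mem_edgeFinset, SimpleGraph.mem_edgeSet, SimpleGraph.top_adj]
    rintro rfl
    exact hv hw
  have hcard : #(S.image (fun w => s(v, w))) = #S :=
    card_image_of_injective _ fun a b h => Sym2.congr_right.1 h
  rw [← hcard, ← erProb_disjoint_edgeSet n p _ (by convert hF)]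
  congr 1
  funext G
  simp only [Set.disjoint_right, coe_image, Set.forall_mem_image, SimpleGraph.mem_edgeSet,
    SimpleGraph.mem_neighborSet]

open Finset in
/-- A vertex of degree less than `d` has at least `n - d` other vertices as non-neighbours. -/
lemma exists_disjoint_neighborSet_of_minDeg_lt {n d : ℕ} (hdn : d ≤ n) (hd1 : 1 ≤ d)
    {G : SimpleGraph (Fin n)} (h : minDeg G < d) :
    ∃ v, ∃ S ∈ (univ.erase v).powersetCard (n - d), Disjoint (G.neighborSet v) S := by
  classical
  have : Nonempty (Fin n) := ⟨⟨0, by lia⟩⟩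
  obtain ⟨v, hv⟩ := exists_lt_of_ciInf_lt h
  rw [← SimpleGraph.coe_neighborFinset, Set.ncard_coe_finset] at hv
  have hle : n - d ≤ #(univ.erase v \ G.neighborFinset v) := by
    have := le_card_sdiff (G.neighborFinset v) (univ.erase v)
    rw [card_erase_of_mem (mem_univ v), card_univ, Fintype.card_fin] at this
    lia
  obtain ⟨S, hS, hScard⟩ := exists_subset_card_eq hle
  rw [subset_sdiff] at hS
  refine ⟨v, S, mem_powersetCard.2 ⟨hS.1, hScard⟩, ?_⟩
  rw [← SimpleGraph.coe_neighborFinset, disjoint_coe]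
  exact hS.2.symm

theorem prob_minDegree_lt_le (n d : ℕ) (hd1 : 1 ≤ d) (hdn : d ≤ n)
    (p : ℝ) (hp0 : 0 ≤ p) (hp1 : p ≤ 1) :
    erProb n p (fun G => minDeg G < d) ≤
      n * (n - 1).choose (d - 1) * (1 - p) ^ (n - d) := by
  calc erProb n p (fun G => minDeg G < d)
      ≤ ∑ v : Fin n, erProb n p (fun G => ∃ S ∈ (Finset.univ.erase v).powersetCard (n - d),
          Disjoint (G.neighborSet v) S) :=
        erProb_le_sum n hp0 hp1 _ _ _ fun G hG => by
          simpa only [Finset.mem_univ, true_and] using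
            exists_disjoint_neighborSet_of_minDeg_lt hdn hd1 hG
    _ ≤ ∑ v : Fin n, ∑ S ∈ (Finset.univ.erase v).powersetCard (n - d),
          erProb n p (fun G => Disjoint (G.neighborSet v) S) :=
        Finset.sum_le_sum fun v _ => erProb_le_sum n hp0 hp1 _ _ _ fun G hG => hG
    _ = ∑ v : Fin n, ∑ S ∈ (Finset.univ.erase v).powersetCard (n - d), (1 - p) ^ (n - d) := by
        refine Finset.sum_congr rfl fun v _ => Finset.sum_congr rfl fun S hS => ?_
        obtain ⟨hsub, hcard⟩ := Finset.mem_powersetCard.1 hS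
        rw [erProb_disjoint_neighborSet n p v S fun hv => Finset.notMem_erase v _ (hsub hv), hcard]
    _ = n * (n - 1).choose (d - 1) * (1 - p) ^ (n - d) := by
        have hchoose : (n - 1).choose (n - d) = (n - 1).choose (d - 1) :=
          Nat.choose_symm_of_eq_add (by lia)
        simp [Finset.card_erase_of_mem, hchoose, mul_assoc]
end

section
/- Let d : ℕ → ℕ satisfy d(n) ≥ 1 for all n, and let p : ℕ → ℝ satisfy 0 < p(n) < 1/2 for all n and n·p(n)/(d(n)·log n) → ∞ as n → ∞. Then the Erdős–Rényi probability that a graph drawn from G(n, p(n)) has minimum degree at most d(n) is at most exp(−p(n)·n·(1 + o(1))); that is, for every ε > 0 there exists N such that for all n ≥ N, P(δ(G(n,p(n))) ≤ d(n)) ≤ exp(−(1−ε)·n·p(n)). -/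
open Finset in
open Classical in
/-- Expanding a product over all potential edges gives a sum over all graphs. -/
theorem sum_simpleGraph_prod_edgeFinset {V R : Type*} [Fintype V] [DecidableEq V]
    [Fintype (SimpleGraph V)] [CommSemiring R]
    (f g : Sym2 V → R) :
    ∑ G : SimpleGraph V, (∏ e ∈ G.edgeFinset, f e) *
        ∏ e ∈ (⊤ : SimpleGraph V).edgeFinset \ G.edgeFinset, g e =
      ∏ e ∈ (⊤ : SimpleGraph V).edgeFinset, (f e + g e) := by
  rw [prod_add]
  refine sum_bij' (fun G _ => G.edgeFinset) (fun S _ => SimpleGraph.fromEdgeSet (S : Set (Sym2 V)))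
    ?_ ?_ ?_ ?_ ?_
  · intro G _
    exact mem_powerset.2 (SimpleGraph.edgeFinset_mono le_top)
  · intro S _
    simp
  · intro G _
    simp
  · intro S hS
    ext e
    simp only [mem_powerset] at hS
    have h : e ∈ S → ¬ e.IsDiag := fun he => by simpa using hS he
    simpa using h
  · intro G _
    rfl

open Finset in
open Classical in
/-- The probability generating function of the degree of a vertex in `G(n, p)`. -/
theorem sum_weight_mul_pow_degree (n : ℕ) (p t : ℝ) (v : Fin n) :
    ∑ G : SimpleGraph (Fin n), p ^ G.edgeSet.ncard * (1 - p) ^ (n.choose 2 - G.edgeSet.ncard) *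
        t ^ (G.neighborSet v).ncard = (1 - p + p * t) ^ (n - 1) := by
  have hdeg (G : SimpleGraph (Fin n)) [Fintype G.edgeSet] :
      #{e ∈ G.edgeFinset | v ∈ e} = (G.neighborSet v).ncard := by
    rw [← Nat.card_coe_set_eq, Nat.card_eq_fintype_card, SimpleGraph.card_neighborSet_eq_degree,
      ← SimpleGraph.card_incidenceFinset_eq_degree, SimpleGraph.incidenceFinset_eq_filter]
  refine Eq.trans (sum_congr rfl fun G _ => ?_) ((sum_simpleGraph_prod_edgeFinset
    (fun e : Sym2 (Fin n) => p * if v ∈ e then t else 1) (fun _ => 1 - p)).trans ?_)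
  · have hcard : #G.edgeFinset = G.edgeSet.ncard := by
      rw [← SimpleGraph.coe_edgeFinset, Set.ncard_coe_finset]
    rw [prod_mul_distrib, prod_const, prod_const, prod_ite, prod_const, prod_const_one, mul_one,
      hdeg, card_sdiff_of_subset (SimpleGraph.edgeFinset_mono le_top),
      SimpleGraph.card_edgeFinset_top_eq_card_choose_two, Fintype.card_fin, hcard]
    ring
  · have hfactor (e : Sym2 (Fin n)) : ((p * if v ∈ e then t else 1) + (1 - p)) =
        if v ∈ e then 1 - p + p * t else 1 := by
      split_ifs <;> ring
    simp_rw [hfactor]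
    rw [prod_ite, prod_const, prod_const_one, mul_one, hdeg, ← Nat.card_coe_set_eq,
      Nat.card_eq_fintype_card, SimpleGraph.card_neighborSet_eq_degree,
      SimpleGraph.complete_graph_degree, Fintype.card_fin]

/-- Chernoff and union bound for the minimum degree of `G(n, p)`. -/
theorem erProb_minDeg_le (n k : ℕ) (hn : 0 < n) (p t : ℝ) (hp0 : 0 ≤ p) (hp1 : p ≤ 1)
    (ht0 : 0 < t) (ht1 : t ≤ 1) :
    erProb n p (fun G => minDeg G ≤ k) ≤ n * ((t ^ k)⁻¹ * (1 - p + p * t) ^ (n - 1)) := by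
  classical
  have : Nonempty (Fin n) := ⟨⟨0, hn⟩⟩
  have hsum : (n : ℝ) * ((t ^ k)⁻¹ * (1 - p + p * t) ^ (n - 1)) =
      ∑ G : SimpleGraph (Fin n), ∑ v : Fin n, (t ^ k)⁻¹ *
        (p ^ G.edgeSet.ncard * (1 - p) ^ (n.choose 2 - G.edgeSet.ncard) *
          t ^ (G.neighborSet v).ncard) := by
    rw [Finset.sum_comm]
    simp_rw [← Finset.mul_sum, sum_weight_mul_pow_degree]
    simp [mul_left_comm]
  rw [hsum, erProb]
  refine Finset.sum_le_sum fun G _ => ?_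
  have hw : 0 ≤ p ^ G.edgeSet.ncard * (1 - p) ^ (n.choose 2 - G.edgeSet.ncard) :=
    mul_nonneg (pow_nonneg hp0 _) (pow_nonneg (sub_nonneg.2 hp1) _)
  have hterm (v : Fin n) : 0 ≤ (t ^ k)⁻¹ *
      (p ^ G.edgeSet.ncard * (1 - p) ^ (n.choose 2 - G.edgeSet.ncard) *
        t ^ (G.neighborSet v).ncard) := by positivity
  split_ifs with h
  · obtain ⟨v, hv⟩ := exists_eq_ciInf_of_finite (f := fun v : Fin n => (G.neighborSet v).ncard)
    have hvk : (G.neighborSet v).ncard ≤ k := by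
      simpa only [minDeg, ← hv] using h
    refine le_trans ?_ (Finset.single_le_sum (fun v _ => hterm v) (Finset.mem_univ v))
    have hone : 1 ≤ (t ^ k)⁻¹ * t ^ (G.neighborSet v).ncard := by
      rw [inv_mul_eq_div, one_le_div (by positivity)]
      exact pow_le_pow_of_le_one ht0.le ht1 hvk
    nlinarith [mul_le_mul_of_nonneg_left hone hw]
  · exact Finset.sum_nonneg fun v _ => hterm v

theorem prob_minDegree_le_of_large_p
    (d : ℕ → ℕ) (hd : ∀ n, 1 ≤ d n)
    (p : ℕ → ℝ) (hp0 : ∀ n, 0 < p n) (hp1 : ∀ n, p n < 1 / 2)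
    (hlim : Filter.Tendsto (fun n : ℕ => n * p n / (d n * Real.log n))
      Filter.atTop Filter.atTop) :
    ∀ ε : ℝ, 0 < ε → ∃ N : ℕ, ∀ n ≥ N,
      erProb n (p n) (fun G => minDeg G ≤ d n) ≤
        Real.exp (-(1 - ε) * n * p n) := by
  intro ε hε
  obtain ⟨t, ht0, ht1, htε⟩ : ∃ t : ℝ, 0 < t ∧ t ≤ 1 ∧ t ≤ ε / 2 :=
    ⟨min 1 (ε / 2), by positivity, min_le_left _ _, min_le_right _ _⟩
  have hlog : Filter.Tendsto (fun n : ℕ => Real.log n) Filter.atTop Filter.atTop :=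
    Real.tendsto_log_atTop.comp tendsto_natCast_atTop_atTop
  rw [← Filter.eventually_atTop]
  filter_upwards [hlim.eventually_ge_atTop ((2 - Real.log t) / (ε / 2)),
    hlog.eventually_ge_atTop 1, Filter.eventually_gt_atTop 0] with n hratio hlogn hn
  have hn' : (0 : ℝ) < n := by exact_mod_cast hn
  have hd1 : (1 : ℝ) ≤ d n := by exact_mod_cast hd n
  have hp := hp0 n
  have hp' := hp1 n
  have hlt : Real.log t ≤ 0 := Real.log_nonpos ht0.le ht1
  refine (erProb_minDeg_le n (d n) hn (p n) t hp.le (by linarith) ht0 ht1).trans ?_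
  have hbase : (1 - p n + p n * t) ^ (n - 1) ≤ Real.exp (-(p n * (1 - t)) * (n - 1)) := by
    have h1 : 1 - p n + p n * t ≤ Real.exp (-(p n * (1 - t))) := by
      linarith [Real.add_one_le_exp (-(p n * (1 - t)))]
    refine (pow_le_pow_left₀ (by nlinarith) h1 _).trans_eq ?_
    rw [← Real.exp_nat_mul, Nat.cast_pred hn, mul_comm]
  have hpow : (t ^ d n)⁻¹ = Real.exp (-(d n * Real.log t)) := by
    rw [Real.exp_neg, Real.exp_nat_mul, Real.exp_log ht0]
  calc (n : ℝ) * ((t ^ d n)⁻¹ * (1 - p n + p n * t) ^ (n - 1))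
      ≤ Real.exp (Real.log n) *
        (Real.exp (-(d n * Real.log t)) * Real.exp (-(p n * (1 - t)) * (n - 1))) := by
        rw [Real.exp_log hn', hpow]
        gcongr
    _ = Real.exp (Real.log n + (-(d n * Real.log t) + -(p n * (1 - t)) * (n - 1))) := by
        rw [Real.exp_add, Real.exp_add]
    _ ≤ Real.exp (-(1 - ε) * n * p n) := by
        refine Real.exp_le_exp.2 ?_
        rw [le_div_iff₀ (by positivity), div_mul_eq_mul_div, div_le_iff₀ (by positivity)] at hratio
        have hdl : 1 ≤ (d n : ℝ) * Real.log n := one_le_mul_of_one_le_of_one_le hd1 hlogn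
        have hlogd : Real.log n ≤ d n * Real.log n := le_mul_of_one_le_left (by linarith) hd1
        have hdd : (d n : ℝ) ≤ d n * Real.log n := le_mul_of_one_le_right (by linarith) hlogn
        have hdt : -(d n * Real.log t) ≤ -Real.log t * (d n * Real.log n) := by
          nlinarith
        have hpt : p n * (1 - t) ≤ 1 := by nlinarith
        have htnp : t * (n * p n) ≤ ε / 2 * (n * p n) := by gcongr
        nlinarith
end
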